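/- Let G be a connected finite simple graph such that: every vertex of G has degree 2 or 3; every connected component of the subgraph of G induced on the vertices of degree 2 is a path containing at least 4 vertices; for each such component path, its two ends have degree-3 neighbors u and v in G which are distinct and non-adjacent in G; and distinct such component paths attach to distinct pairs of degree-3 vertices. (Equivalently, G is obtained from a simple cubic graph by replacing some of its edges with internally disjoint paths of length at least 5.) Then lir(^2G) ≤ 2. -/

import Mathlib

open scoped Classical

/-- The red degree of a vertex `x`: the sum of the red multiplicities `r e`
over all edges `e` of `G` incident with `x`. -/
noncomputable def redDeg {V : Type*} [Fintype V] [DecidableEq V]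
    (G : SimpleGraph V) (r : Sym2 V → ℕ) (x : V) : ℕ :=
  ∑ e ∈ G.edgeFinset.filter (fun e => x ∈ e), r e

/-- The blue degree of a vertex `x`: the sum of `2 - r e` over all edges `e`
of `G` incident with `x`. -/
noncomputable def blueDeg {V : Type*} [Fintype V] [DecidableEq V]
    (G : SimpleGraph V) (r : Sym2 V → ℕ) (x : V) : ℕ :=
  ∑ e ∈ G.edgeFinset.filter (fun e => x ∈ e), (2 - r e)

/-- `r : E(G) → {0,1,2}` encodes a locally irregular 2-edge-coloring of `²G`:
every edge gets a red multiplicity at most 2, and for every edge `uv`, if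
`r s(u,v) ≥ 1` the red degrees of `u` and `v` differ, and if `r s(u,v) ≤ 1`
the blue degrees of `u` and `v` differ. -/
def IsLIR2 {V : Type*} [Fintype V] [DecidableEq V]
    (G : SimpleGraph V) (r : Sym2 V → ℕ) : Prop :=
  (∀ e ∈ G.edgeSet, r e ≤ 2) ∧
  ∀ u v : V, G.Adj u v →
    (1 ≤ r s(u, v) → redDeg G r u ≠ redDeg G r v) ∧
    (r s(u, v) ≤ 1 → blueDeg G r u ≠ blueDeg G r v)

/-- `lir(²G) ≤ 2`: there is a locally irregular 2-edge-coloring of `²G`. -/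
def LIRtwoLE2 {V : Type*} [Fintype V] [DecidableEq V] (G : SimpleGraph V) : Prop :=
  ∃ r : Sym2 V → ℕ, IsLIR2 G r

/-!
Read the multiplicities `r e` modulo `3`. The blue degree of `v` is congruent to minus the sum of
its red degree and `deg v`, so it suffices to realise red degrees `c : V → ZMod 3` for which
neither `c` nor `c + deg` takes equal values at adjacent vertices. By duality `c` is realisable as
soon as it is orthogonal to every weighting `φ : V → ZMod 3` whose values cancel along every edge.
On a connected graph these `φ` are the multiples of a single one, which is nowhere zero unless it
vanishes, so there is at most one linear condition `∑ v, φ v * c v = 0` to satisfy.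

If `G` is cubic, Brooks' theorem provides `c`, except for `K₄`; if moreover there is a nonzero `φ`,
it is constant on the two sides of the graph, and one side is coloured `0` and the other with `1`
and `2` so as to satisfy the condition.

If `G` has vertices of degree `2`, a proper colouring of the cubic vertices forces the values at
the first and last vertices of the threads and extends greedily to the others. At an edge `y z`
both of whose ends only have neighbours of degree `2`, the values can be changed so that
`c y - c z` is any given nonzero number, and then the sum takes all values but one. A second change
elsewhere moves the exceptional value: there is either another such edge disjoint from the first,
or a cubic vertex all of whose neighbours are cubic.
-/

section Connectivity

open SimpleGraph

variable {V : Type*} {G : SimpleGraph V}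

theorem exists_adj_mem_notMem (hG : G.Preconnected) {S : Set V} {u v : V} (hu : u ∈ S)
    (hv : v ∉ S) : ∃ x ∈ S, ∃ y ∉ S, G.Adj x y := by
  obtain ⟨p⟩ := hG u v
  obtain ⟨d, -, hd⟩ := p.exists_boundary_dart S hu hv
  exact ⟨d.fst, hd.1, d.snd, hd.2, d.adj⟩

theorem exists_adj_mem_notMem_of_induce {T S : Set V} (hT : (G.induce T).Preconnected) {u v : V}
    (huT : u ∈ T) (hu : u ∈ S) (hvT : v ∈ T) (hv : v ∉ S) :
    ∃ x ∈ T, x ∈ S ∧ ∃ y ∈ T, y ∉ S ∧ G.Adj x y := by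
  obtain ⟨x, hx, y, hy, h⟩ :=
    exists_adj_mem_notMem hT (S := {w | (w : V) ∈ S}) (u := ⟨u, huT⟩) (v := ⟨v, hvT⟩) hu hv
  exact ⟨x, x.2, hx, y, y.2, hy, h⟩

theorem exists_induced_path_of_ne_top (hG : G.Connected) (hne : G ≠ ⊤) :
    ∃ a x b, G.Adj a x ∧ G.Adj x b ∧ ¬ G.Adj a b ∧ a ≠ b := by
  obtain ⟨u, v, huv, hadj⟩ := ne_top_iff_exists_not_adj.1 hne
  obtain ⟨p, hp⟩ := hG.exists_walk_length_eq_dist u v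
  exact p.exists_adj_adj_not_adj_ne hp (hG.one_lt_dist_of_ne_of_not_adj huv hadj)

theorem ncard_supp_le_of_closed [Finite V] {S T : Set V} {x : S} (hx : ↑x ∈ T)
    (hT : ∀ v ∈ T, ∀ w ∈ S, G.Adj v w → w ∈ T) :
    ((G.induce S).connectedComponentMk x).supp.ncard ≤ T.ncard := by
  have hreach : ∀ {y z : S}, (G.induce S).Walk y z → ↑z ∈ T → ↑y ∈ T := by
    intro y z p hz
    induction p with
    | nil => exact hz
    | cons h _ ih => exact hT _ (ih hz) _ (Subtype.prop _) h.symm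
  refine Set.ncard_le_ncard_of_injOn Subtype.val (fun y hy ↦ ?_) Subtype.val_injective.injOn
  obtain ⟨p⟩ := ConnectedComponent.exact hy
  exact hreach p hx

end Connectivity

section Cycles

open SimpleGraph

variable {V : Type*} {G : SimpleGraph V}

theorem exists_walk_mem_support_iff_of_isCycle {v : V} :
    ∀ {c : G.Walk v v}, c.IsCycle →
      ∃ (x y : V) (q : G.Walk x y), ∀ w, w ∈ q.support ↔ w ∈ c.support ∧ w ≠ v
  | .nil, hc => absurd rfl hc.ne_nil
  | .cons (v := x) h p, hc => by
    have hp := ((Walk.cons_isCycle_iff p h).1 hc).1.reverse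
    have hsupp : ∀ w, w ∈ (p.cons h).support ↔ w = v ∨ w ∈ p.reverse.support := by simp
    match p.reverse, hp, hsupp with
    | .nil, _, _ => exact absurd rfl h.ne
    | .cons (v := y) _ q, hq, hsupp =>
      have hv := ((Walk.cons_isPath_iff _ q).1 hq).2
      refine ⟨y, x, q, fun w ↦ ?_⟩
      rw [hsupp, Walk.support_cons, List.mem_cons]
      grind

theorem preconnected_induce_support_diff_singleton {u v : V} {c : G.Walk u u} (hc : c.IsCycle)
    (hv : v ∈ c.support) : (G.induce ({w | w ∈ c.support} \ {v})).Preconnected := by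
  obtain ⟨x, y, q, hq⟩ := exists_walk_mem_support_iff_of_isCycle (hc.rotate hv)
  have hset : {w | w ∈ c.support} \ {v} = {w | w ∈ q.support} := by
    ext w
    simp [hq, Walk.mem_support_rotate_iff]
  exact hset ▸ q.connected_induce_support.preconnected

theorem exists_isPath_forall_adj_mem [Finite V] {b : V} {S : Set V} (hb : b ∉ S) :
    ∃ (e : V) (t : G.Walk b e), t.IsPath ∧ (∀ w ∈ t.support, w ∉ S) ∧
      ∀ w, G.Adj e w → w ∈ S ∨ w ∈ t.support := by
  by_contra! hext
  have hlong : ∀ n, ∃ (e : V) (t : G.Walk b e),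
      t.IsPath ∧ (∀ w ∈ t.support, w ∉ S) ∧ t.length = n := by
    intro n
    induction n with
    | zero => exact ⟨b, .nil, .nil, by simpa using hb, rfl⟩
    | succ n ih =>
      obtain ⟨e, t, ht, htS, rfl⟩ := ih
      obtain ⟨w, hew, hwS, hwt⟩ := hext e t ht htS
      refine ⟨w, t.concat hew, ht.concat hwt hew, fun v hv ↦ ?_, t.length_concat hew⟩
      rcases List.mem_append.1 (t.support_concat hew ▸ hv) with hv | hv
      exacts [htS v hv, List.mem_singleton.1 hv ▸ hwS]
  have := Fintype.ofFinite V
  obtain ⟨e, t, ht, -, hlen⟩ := hlong (Fintype.card V)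
  exact ht.length_lt.ne hlen

theorem exists_isCycle_of_isPath {u v : V} {p : G.Walk u v} (hp : p.IsPath)
    (hsupp : ∀ w, G.Adj v w → w ∈ p.support) (hv : (G.neighborSet v).Nontrivial) :
    ∃ c : G.Walk v v, c.IsCycle ∧ (∀ w, G.Adj v w → w ∈ c.support) ∧ c.support ⊆ p.support := by
  induction p with
  | nil =>
    obtain ⟨w, hw⟩ := hv.nonempty
    exact absurd (by simpa using hsupp w hw) (Adj.ne' hw)
  | @cons u w v h p ih =>
    obtain ⟨hp', hu⟩ := (Walk.cons_isPath_iff h p).1 hp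
    by_cases hvu : G.Adj v u
    · refine ⟨(p.cons h).cons hvu, (Walk.cons_isCycle_iff _ _).2 ⟨hp, fun he ↦ ?_⟩,
        fun x hx ↦ List.mem_cons_of_mem _ (hsupp x hx), by simp⟩
      rcases List.mem_cons.1 ((Walk.edges_cons h p) ▸ he) with he | he
      · obtain rfl : v = w := by simpa [Sym2.eq_iff, hvu.ne] using he
        obtain rfl := (Walk.isPath_iff_nil.1 hp').eq_nil
        obtain ⟨x, hx, hxu⟩ := hv.exists_ne u
        have hxv : x ≠ v := Adj.ne' hx
        simpa [hxu, hxv] using hsupp x hx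
      · exact hu (p.snd_mem_support_of_mem_edges he)
    · obtain ⟨c, hc, hcv, hcp⟩ := ih hp' (fun x hx ↦ by
        have hxu : x ≠ u := by rintro rfl; exact hvu hx
        simpa [hxu] using hsupp x hx) hv
      exact ⟨c, hc, hcv, List.subset_cons_of_subset _ hcp⟩

end Cycles

section GreedyColoring

open SimpleGraph Function

variable {V α : Type*} {G : SimpleGraph V}

/-- `f` is a proper colouring of the subgraph of `G` induced on `S`. The colouring is a function on
all of `V`, so that partial colourings can be extended by `Function.update`. -/
def IsColoringOn (G : SimpleGraph V) (S : Set V) (f : V → α) : Prop :=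
  ∀ ⦃u⦄, u ∈ S → ∀ ⦃v⦄, v ∈ S → G.Adj u v → f u ≠ f v

theorem ncard_neighborSet [Fintype V] (v : V) : (G.neighborSet v).ncard = G.degree v :=
  Set.ncard_eq_toFinset_card' _

namespace IsColoringOn

variable {S T : Set V} {f : V → α}

theorem mono (hf : IsColoringOn G T f) (hST : S ⊆ T) : IsColoringOn G S f :=
  fun _ hu _ hv ↦ hf (hST hu) (hST hv)

theorem update_insert (hf : IsColoringOn G S f) {v : V} {k : α}
    (hk : ∀ w ∈ S, G.Adj v w → f w ≠ k) : IsColoringOn G (insert v S) (update f v k) := by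
  intro u hu w hw huw
  rcases eq_or_ne u v with rfl | huv
  · have hwu := huw.ne'
    rw [update_self, update_of_ne hwu]
    exact (hk w (hw.resolve_left hwu) huw).symm
  · rw [update_of_ne huv]
    rcases eq_or_ne w v with rfl | hwv
    · rw [update_self]
      exact hk u (hu.resolve_left huv) huw.symm
    · rw [update_of_ne hwv]
      exact hf (hu.resolve_left huv) (hw.resolve_left hwv) huw

theorem exists_update_insert (hf : IsColoringOn G S f) {v : V}
    (hv : (f '' (G.neighborSet v ∩ S)).ncard < Nat.card α) :
    ∃ k, IsColoringOn G (insert v S) (update f v k) := by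
  have hne : f '' (G.neighborSet v ∩ S) ≠ Set.univ := fun h ↦
    hv.ne (h.symm ▸ Set.ncard_univ α)
  obtain ⟨k, hk⟩ := (Set.ne_univ_iff_exists_notMem _).1 hne
  exact ⟨k, hf.update_insert fun w hw hvw h ↦ hk ⟨w, ⟨hvw, hw⟩, h⟩⟩

theorem exists_extension [Finite V] (hf : IsColoringOn G S f) (hST : S ⊆ T)
    (hdeg : ∀ W, S ⊂ W → W ⊆ T → ∃ v ∈ W \ S, (G.neighborSet v ∩ W).ncard < Nat.card α) :
    ∃ g : V → α, IsColoringOn G T g ∧ Set.EqOn g f S := by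
  induction T using WellFoundedLT.induction with
  | ind T ih =>
    rcases hST.eq_or_ssubset with rfl | hlt
    · exact ⟨f, hf, Set.eqOn_refl f S⟩
    · obtain ⟨v, ⟨hvT, hvS⟩, hv⟩ := hdeg T hlt subset_rfl
      have hT : insert v (T \ {v}) = T := Set.insert_sdiff_self_of_mem hvT
      obtain ⟨g, hg, hgf⟩ := ih (T \ {v}) (Set.sdiff_singleton_ssubset.2 hvT)
        (Set.subset_sdiff_singleton hST hvS)
        fun W hSW hWT ↦ hdeg W hSW (hWT.trans Set.sdiff_subset)
      have hcard : (g '' (G.neighborSet v ∩ (T \ {v}))).ncard < Nat.card α :=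
        ((Set.ncard_image_le (Set.toFinite _)).trans
          (Set.ncard_le_ncard (Set.inter_subset_inter_right _ Set.sdiff_subset))).trans_lt hv
      obtain ⟨k, hk⟩ := hg.exists_update_insert hcard
      refine ⟨update g v k, hT ▸ hk, fun w hw ↦ ?_⟩
      rw [update_of_ne (ne_of_mem_of_not_mem hw hvS), hgf hw]

theorem exists_coloring [Finite V] (hf : IsColoringOn G {v}ᶜ f)
    (hv : (f '' G.neighborSet v).ncard < Nat.card α) : Nonempty (G.Coloring α) := by
  obtain ⟨k, hk⟩ := hf.exists_update_insert
    ((Set.ncard_le_ncard (Set.image_mono Set.inter_subset_left)).trans_lt hv)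
  refine ⟨Coloring.mk _ fun {a b} h ↦ hk ?_ ?_ h⟩ <;> simp [em]

variable [Fintype V]

theorem exists_extension_compl_singleton (hf : IsColoringOn G S f)
    (hdeg : ∀ v, G.degree v ≤ Nat.card α) {x : V} (hx : x ∉ S)
    (hS : (G.induce Sᶜ).Preconnected) :
    ∃ g : V → α, IsColoringOn G {x}ᶜ g ∧ Set.EqOn g f S := by
  refine hf.exists_extension (Set.subset_compl_singleton_iff.2 hx) fun W hSW hWx ↦ ?_
  obtain ⟨u, huW, huS⟩ := Set.exists_of_ssubset hSW
  obtain ⟨v, hvS, hvW, w, -, hwW, hvw⟩ := exists_adj_mem_notMem_of_induce hS huS huW hx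
    (Set.subset_compl_singleton_iff.1 hWx)
  exact ⟨v, ⟨hvW, hvS⟩, (Set.ncard_lt_ncard
    ⟨Set.inter_subset_left, fun h ↦ hwW (h hvw).2⟩).trans_le (ncard_neighborSet v ▸ hdeg v)⟩

theorem exists_coloring_of_eq (hf : IsColoringOn G {v}ᶜ f) (hv : G.degree v ≤ Nat.card α)
    {a b : V} (ha : G.Adj v a) (hb : G.Adj v b) (hab : a ≠ b) (hfab : f a = f b) :
    Nonempty (G.Coloring α) := by
  refine hf.exists_coloring (lt_of_lt_of_le ?_ (ncard_neighborSet v ▸ hv))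
  refine (Set.ncard_image_le (Set.toFinite _)).lt_of_ne fun h ↦ hab ?_
  exact Set.injOn_of_ncard_image_eq h (Set.toFinite _) ha hb hfab

end IsColoringOn

theorem exists_isColoringOn_compl_singleton [Fintype V] [Nonempty α] (hG : G.Preconnected)
    (hdeg : ∀ v, G.degree v ≤ Nat.card α) (x : V) : ∃ f : V → α, IsColoringOn G {x}ᶜ f := by
  have hS : (G.induce (∅ : Set V)ᶜ).Preconnected := by
    rw [Set.compl_empty]
    exact (induceUnivIso G).symm.preconnected_iff.1 hG
  have hempty : IsColoringOn G ∅ fun _ ↦ Classical.arbitrary α := by simp [IsColoringOn]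
  obtain ⟨g, hg, -⟩ := hempty.exists_extension_compl_singleton hdeg (Set.notMem_empty x) hS
  exact ⟨g, hg⟩

end GreedyColoring

section Brooks

open SimpleGraph Function

variable {V α : Type*} [Fintype V] {G : SimpleGraph V}

theorem exists_coloring_of_degree_lt (hG : G.Preconnected) (hdeg : ∀ v, G.degree v ≤ Nat.card α)
    {x : V} (hx : G.degree x < Nat.card α) : Nonempty (G.Coloring α) := by
  have : Nonempty α := (Nat.card_pos_iff.1 (Nat.zero_lt_of_lt hx)).1
  obtain ⟨f, hf⟩ := exists_isColoringOn_compl_singleton (α := α) hG hdeg x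
  exact hf.exists_coloring
    ((Set.ncard_image_le (Set.toFinite _)).trans_lt (ncard_neighborSet x ▸ hx))

-- The greedy colouring ends at `x`, two of whose neighbours, `y` on the cycle and `w` off it, share
-- a colour: `y` can be given the colour of `w` first because it has no neighbour off the cycle.
theorem exists_coloring_of_isCycle [Nonempty α] (hG : G.Preconnected)
    (hdeg : ∀ v, G.degree v ≤ Nat.card α)
    {e z : V} {c : G.Walk e e} (hc : c.IsCycle) (he : ∀ w, G.Adj e w → w ∈ c.support)
    (hz : z ∉ c.support) : Nonempty (G.Coloring α) := by
  set C : Set V := {w | w ∈ c.support}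
  obtain ⟨u, huC, u', hu'C, huu'⟩ := exists_adj_mem_notMem hG (S := C)
    c.start_mem_support hz
  obtain ⟨x, hxC, ⟨w, hwC, hxw⟩, y, hyC, hy, hxy⟩ := exists_adj_mem_notMem_of_induce
    c.connected_induce_support.preconnected (S := {v | ∃ w ∉ C, G.Adj v w})
    huC ⟨u', hu'C, huu'⟩ c.start_mem_support fun ⟨w, hwC, hew⟩ ↦ hwC (he w hew)
  have hyout : ∀ v ∈ Cᶜ, ¬ G.Adj y v := fun v hv hyv ↦ hy ⟨v, hv, hyv⟩
  have hwy : w ≠ y := fun h ↦ hwC (h ▸ hyC)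
  obtain ⟨f, hf⟩ := exists_isColoringOn_compl_singleton (α := α) hG hdeg y
  have hCy : Cᶜ ⊆ {y}ᶜ := Set.compl_subset_compl.2 (Set.singleton_subset_iff.2 hyC)
  have hfy : IsColoringOn G (insert y Cᶜ) (update f y (f w)) :=
    (hf.mono hCy).update_insert fun v hv hyv ↦ absurd hyv (hyout v hv)
  have hcompl : (insert y Cᶜ)ᶜ = C \ {y} := by ext; simp; tauto
  obtain ⟨g, hg, hgf⟩ := hfy.exists_extension_compl_singleton hdeg (x := x)
    (hcompl.symm ▸ ⟨hxC, hxy.ne⟩ : x ∈ (insert y Cᶜ)ᶜ)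
    (hcompl ▸ preconnected_induce_support_diff_singleton hc hyC)
  refine hg.exists_coloring_of_eq (hdeg x) hxw hxy hwy ?_
  rw [hgf (.inr hwC), hgf (.inl rfl), update_self, update_of_ne hwy]

-- The nonadjacent vertices `a` and `b` are given the same colour first, and the greedy colouring of
-- the connected rest of the graph ends at their common neighbour `x`.
theorem exists_coloring_of_spanning_walk (hdeg : ∀ v, G.degree v ≤ Nat.card α)
    {a b x u v w : V} (hxa : G.Adj x a) (hxb : G.Adj x b) (hab : ¬ G.Adj a b) (hne : a ≠ b)
    {p : G.Walk u v} (hp : {a, b, x}ᶜ ⊆ {y | y ∈ p.support}) (hap : a ∉ p.support)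
    (hbp : b ∉ p.support) (hxw : G.Adj x w) (hwp : w ∈ p.support) : Nonempty (G.Coloring α) := by
  have : Nonempty α :=
    (Nat.card_pos_iff.1 (((G.degree_pos_iff_exists_adj x).2 ⟨a, hxa⟩).trans_le (hdeg x))).1
  have hf : IsColoringOn G {a, b} fun _ ↦ Classical.arbitrary α := by
    rintro u (rfl | rfl) v (rfl | rfl) huv
    exacts [absurd huv G.irrefl, absurd huv hab, absurd huv.symm hab, absurd huv G.irrefl]
  have hcompl : {a, b}ᶜ = {x, w} ∪ {y | y ∈ p.support} := by
    ext y
    have := @hp y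
    grind [hxa.ne, hxb.ne]
  have hconn : (G.induce {a, b}ᶜ).Preconnected := hcompl ▸ (induce_union_connected
    (induce_pair_connected_of_adj hxw).preconnected p.connected_induce_support.preconnected
    ⟨w, .inr rfl, hwp⟩).preconnected
  obtain ⟨g, hg, hgf⟩ := hf.exists_extension_compl_singleton hdeg (x := x)
    (by simp [hxa.ne, hxb.ne]) hconn
  exact hg.exists_coloring_of_eq (hdeg x) hxa hxb hne
    ((hgf (.inl rfl)).trans (hgf (.inr rfl)).symm)

theorem exists_coloring_of_spanning_path (hdeg : ∀ v, G.degree v ≤ Nat.card α)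
    {a b x e : V} (hx : 3 ≤ G.degree x) (hxa : G.Adj x a) (hxb : G.Adj x b) (hab : ¬ G.Adj a b)
    (hne : a ≠ b) {t : G.Walk b e} (ht : t.IsPath) (hat : a ∉ t.support)
    (hspan : ∀ z, z = a ∨ z = x ∨ z ∈ t.support) : Nonempty (G.Coloring α) := by
  obtain ⟨w, hxw, hwab⟩ : ∃ w ∈ G.neighborSet x, w ∉ ({a, b} : Set V) :=
    Set.exists_mem_notMem_of_ncard_lt_ncard (by rwa [Set.ncard_pair hne, ncard_neighborSet])
  obtain ⟨hwa, hwb⟩ : w ≠ a ∧ w ≠ b := by simpa using hwab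
  have hwt := ((hspan w).resolve_left hwa).resolve_left (Adj.ne' hxw)
  cases t with
  | nil => exact absurd (by simpa using hwt) hwb
  | cons h p =>
    rw [Walk.support_cons, List.mem_cons] at hwt hat
    refine exists_coloring_of_spanning_walk hdeg hxa hxb hab hne (p := p) (fun z hz ↦ ?_)
      (not_or.1 hat).2 ((Walk.cons_isPath_iff h p).1 ht).2 hxw (hwt.resolve_left hwb)
    have := hspan z
    rw [Walk.support_cons, List.mem_cons] at this
    grind

theorem exists_coloring_of_regular (hG : G.Connected) (hne : G ≠ ⊤)
    (hα : 3 ≤ Nat.card α) (hreg : ∀ v, G.degree v = Nat.card α) :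
    Nonempty (G.Coloring α) := by
  have : Nonempty α := (Nat.card_pos_iff.1 (by lia)).1
  have hdeg := fun v ↦ (hreg v).le
  obtain ⟨a, x, b, hax, hxb, hab, hne_ab⟩ := exists_induced_path_of_ne_top hG hne
  obtain ⟨e, t, ht, htS, hte⟩ := exists_isPath_forall_adj_mem (G := G) (b := b) (S := {a, x})
    (by simp [hne_ab.symm, hxb.ne'])
  have hat : a ∉ t.support := fun h ↦ htS a h (.inl rfl)
  have hxt : x ∉ t.support := fun h ↦ htS x h (.inr rfl)
  have hP : ((t.cons hxb).cons hax).IsPath :=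
    (ht.cons hxt).cons (by simp [hax.ne, hat])
  obtain ⟨c, hc, hce, hcP⟩ := exists_isCycle_of_isPath hP
    (fun w hw ↦ by simpa [or_assoc] using hte w hw)
    (Set.one_lt_ncard_iff_nontrivial.1 (by rw [ncard_neighborSet, hreg]; lia))
  by_cases hspan : ∀ z, z ∈ c.support
  · exact exists_coloring_of_spanning_path hdeg ((hreg x).symm ▸ hα) hax.symm hxb hab hne_ab ht hat
      fun z ↦ by simpa using hcP (hspan z)
  · push Not at hspan
    obtain ⟨z, hz⟩ := hspan
    exact exists_coloring_of_isCycle hG.preconnected hdeg hc hce hz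

theorem brooks {k : ℕ} (hk : 3 ≤ k) (hG : G.Connected) (hne : G ≠ ⊤)
    (hdeg : ∀ v, G.degree v ≤ k) : G.Colorable k := by
  by_cases hreg : ∀ v, G.degree v = k
  · exact exists_coloring_of_regular hG hne (by simpa using hk) (by simpa using hreg)
  · push Not at hreg
    obtain ⟨x, hx⟩ := hreg
    exact exists_coloring_of_degree_lt hG.preconnected (by simpa using hdeg)
      (by simpa using (hdeg x).lt_of_ne hx)

end Brooks

section AlternatingWeightings

variable {V K : Type*} {G : SimpleGraph V}

/-- A vertex weighting whose values at the two ends of every edge cancel, i.e. an element of the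
kernel of the transposed incidence matrix of `G`. -/
def IsAlternatingWeighting [AddMonoid K] (G : SimpleGraph V) (φ : V → K) : Prop :=
  ∀ ⦃u v⦄, G.Adj u v → φ u + φ v = 0

namespace IsAlternatingWeighting

theorem eq_zero_of_apply_eq_zero [AddMonoid K] {φ : V → K} (hφ : IsAlternatingWeighting G φ)
    (hG : G.Preconnected) {v : V} (hv : φ v = 0) : φ = 0 := by
  by_contra hne
  obtain ⟨w, hw⟩ := Function.ne_iff.1 hne
  obtain ⟨x, hx, y, hy, hxy⟩ := exists_adj_mem_notMem hG (S := {u | φ u = 0}) hv hw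
  exact hy (by simpa [show φ x = 0 from hx] using hφ hxy)

theorem smul_sub_smul [CommRing K] {φ ψ : V → K} (hφ : IsAlternatingWeighting G φ)
    (hψ : IsAlternatingWeighting G ψ) (a b : K) : IsAlternatingWeighting G (a • φ - b • ψ) := by
  intro u v huv
  simp only [Pi.sub_apply, Pi.smul_apply, smul_eq_mul]
  linear_combination a * hφ huv - b * hψ huv

theorem sum_mul_eq_zero [Fintype V] [Field K] {φ ψ : V → K} (hφ : IsAlternatingWeighting G φ)
    (hψ : IsAlternatingWeighting G ψ) (hG : G.Preconnected) {v : V} (hv : φ v ≠ 0) {c : V → K}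
    (hc : ∑ w, φ w * c w = 0) : ∑ w, ψ w * c w = 0 := by
  have hzero : φ v • ψ - ψ v • φ = 0 :=
    (hψ.smul_sub_smul hφ (φ v) (ψ v)).eq_zero_of_apply_eq_zero hG (v := v) (by simp [mul_comm])
  have hprop : φ v * ∑ w, ψ w * c w = ψ v * ∑ w, φ w * c w := by
    simp only [Finset.mul_sum, ← mul_assoc]
    exact Finset.sum_congr rfl fun w _ ↦ congrArg (· * c w) (sub_eq_zero.1 (congrFun hzero w))
  exact (mul_eq_zero.1 (by rw [hprop, hc, mul_zero])).resolve_left hv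

end IsAlternatingWeighting

-- A linear functional vanishing on all vectors of incidence sums is given by an alternating
-- weighting, so a target orthogonal to these is a vector of incidence sums.
theorem exists_sum_incident_eq [Fintype V] [DecidableEq V] [Field K] {c : V → K}
    (hc : ∀ φ, IsAlternatingWeighting G φ → ∑ v, φ v * c v = 0) :
    ∃ r : Sym2 V → K, ∀ x, ∑ e ∈ G.edgeFinset with x ∈ e, r e = c x := by
  let L : (Sym2 V → K) →ₗ[K] (V → K) :=
    LinearMap.pi fun x ↦ ∑ e ∈ G.edgeFinset with x ∈ e, LinearMap.proj e
  have hL : ∀ r x, L r x = ∑ e ∈ G.edgeFinset with x ∈ e, r e := by simp [L]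
  suffices hmem : c ∈ LinearMap.range L by
    obtain ⟨r, rfl⟩ := hmem
    exact ⟨r, fun x ↦ (hL r x).symm⟩
  by_contra hmem
  obtain ⟨f, hfc, hfL⟩ := Submodule.exists_le_ker_of_notMem hmem
  have hf : ∀ d : V → K, f d = ∑ v, f (Pi.single v 1) * d v := by
    intro d
    conv_lhs => rw [pi_eq_sum_univ' d, map_sum]
    simp [mul_comm]
  refine hfc ((hf c).trans (hc (fun v ↦ f (Pi.single v 1)) fun u v huv ↦ ?_))
  have hLuv : L (Pi.single s(u, v) 1) = Pi.single u 1 + Pi.single v 1 := by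
    ext x
    have := huv.ne
    simp only [hL, Pi.single_apply, Finset.sum_ite_eq', Finset.mem_filter,
      SimpleGraph.mem_edgeFinset, SimpleGraph.mem_edgeSet, huv, Sym2.mem_iff, true_and,
      Pi.add_apply]
    grind
  rw [← map_add, ← hLuv]
  exact hfL ⟨_, rfl⟩

end AlternatingWeightings

section ModThree

variable {V : Type*} [Fintype V] {G : SimpleGraph V}

/-- A prescription `c` of red degrees modulo `3` for which, at every edge, both the red degrees and
the blue degrees of the two ends differ modulo `3`. Since the red and the blue degree of `v` add up
to `2 * G.degree v`, the blue degree of `v` is `-(c v + G.degree v)` modulo `3`. -/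
def IsAdmissible (G : SimpleGraph V) (c : V → ZMod 3) : Prop :=
  ∀ ⦃u v⦄, G.Adj u v → c u ≠ c v ∧ c u + G.degree u ≠ c v + G.degree v

variable [DecidableEq V]

theorem redDeg_add_blueDeg {r : Sym2 V → ℕ} (hr : ∀ e, r e ≤ 2) (x : V) :
    redDeg G r x + blueDeg G r x = 2 * G.degree x := by
  have hcard : (G.edgeFinset.filter (x ∈ ·)).card = G.degree x := by
    rw [← G.card_incidenceFinset_eq_degree x, G.incidenceFinset_eq_filter x]
  rw [redDeg, blueDeg, ← Finset.sum_add_distrib, ← hcard, mul_comm, ← smul_eq_mul,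
    Finset.sum_const_nat (m := 2) fun e _ ↦ Nat.add_sub_of_le (hr e), smul_eq_mul]

theorem lirtwoLE2_of_forall_ne {r : Sym2 V → ℕ} (hr : ∀ e, r e ≤ 2)
    (h : ∀ u v, G.Adj u v → redDeg G r u ≠ redDeg G r v ∧ blueDeg G r u ≠ blueDeg G r v) :
    LIRtwoLE2 G :=
  ⟨r, fun e _ ↦ hr e, fun u v huv ↦ ⟨fun _ ↦ (h u v huv).1, fun _ ↦ (h u v huv).2⟩⟩

theorem IsAdmissible.lirtwoLE2 {c : V → ZMod 3} (hc : IsAdmissible G c)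
    (horth : ∀ φ : V → ZMod 3, IsAlternatingWeighting G φ → ∑ v, φ v * c v = 0) : LIRtwoLE2 G := by
  have : Fact (Nat.Prime 3) := ⟨Nat.prime_three⟩
  obtain ⟨r, hr⟩ := exists_sum_incident_eq horth
  have hr2 : ∀ e, (r e).val ≤ 2 := fun e ↦ Nat.le_of_lt_succ (ZMod.val_lt (r e))
  have hred : ∀ x, (redDeg G (fun e ↦ (r e).val) x : ZMod 3) = c x := fun x ↦ by
    simp [redDeg, ← hr x]
  have hblue : ∀ x, (blueDeg G (fun e ↦ (r e).val) x : ZMod 3) = -(c x + G.degree x) := fun x ↦ by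
    have hsum := congrArg (Nat.cast : ℕ → ZMod 3) (redDeg_add_blueDeg (G := G) hr2 x)
    push_cast [hred] at hsum
    have h3 : (3 : ZMod 3) = 0 := rfl
    linear_combination hsum + G.degree x * h3
  refine lirtwoLE2_of_forall_ne hr2 fun u v huv ↦ ⟨fun h ↦ (hc huv).1 ?_, fun h ↦ (hc huv).2 ?_⟩
  · rw [← hred u, ← hred v, h]
  · rw [← neg_inj, ← hblue u, ← hblue v, h]

theorem lirtwoLE2_of_forall_isAlternatingWeighting (hG : G.Preconnected)
    (hex : ∃ c, IsAdmissible G c)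
    (halt : ∀ φ : V → ZMod 3, IsAlternatingWeighting G φ → (∀ v, φ v ≠ 0) →
      ∃ c, IsAdmissible G c ∧ ∑ v, φ v * c v = 0) : LIRtwoLE2 G := by
  have : Fact (Nat.Prime 3) := ⟨Nat.prime_three⟩
  by_cases hφ : ∃ φ : V → ZMod 3, IsAlternatingWeighting G φ ∧ ∃ v, φ v ≠ 0
  · obtain ⟨φ, hφ, v, hv⟩ := hφ
    have hne : ∀ w, φ w ≠ 0 := fun w hw ↦
      hv (congrFun (hφ.eq_zero_of_apply_eq_zero hG hw) v)
    obtain ⟨c, hc, hsum⟩ := halt φ hφ hne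
    exact hc.lirtwoLE2 fun ψ hψ ↦ hφ.sum_mul_eq_zero hψ hG hv hsum
  · push Not at hφ
    obtain ⟨c, hc⟩ := hex
    exact hc.lirtwoLE2 fun φ h ↦ Finset.sum_eq_zero fun v _ ↦ by rw [hφ φ h v, zero_mul]

end ModThree

section AlternatingColorings

variable {V : Type*} {G : SimpleGraph V} {φ : V → ZMod 3}

theorem IsAlternatingWeighting.apply_eq_iff_ne (hφ : IsAlternatingWeighting G φ) {u v : V}
    (huv : G.Adj u v) (hu : φ u ≠ 0) {β : ZMod 3} (hβ : β ≠ 0) : φ u = β ↔ φ v ≠ β := by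
  have key : ∀ x y b : ZMod 3, x + y = 0 → x ≠ 0 → b ≠ 0 → (x = b ↔ y ≠ b) := by decide
  exact key _ _ _ (hφ huv) hu hβ

theorem IsAlternatingWeighting.isColoringOn_ite (hφ : IsAlternatingWeighting G φ)
    (hne : ∀ v, φ v ≠ 0) {β : ZMod 3} (hβ : β ≠ 0) {g : V → ZMod 3} (hg : ∀ v, g v ≠ 0) :
    IsColoringOn G Set.univ fun v ↦ if φ v = β then g v else 0 := by
  intro u _ v _ huv
  have := hφ.apply_eq_iff_ne huv (hne u) hβ
  have := hg u
  have := hg v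
  grind

end AlternatingColorings

section RegularGraphs

variable {V : Type*} [Fintype V] {G : SimpleGraph V}

theorem sum_mul_eq_add_of_forall_notMem {R : Type*} [CommRing R] (φ : V → R) {c c' : V → R}
    {A : Finset V} (h : ∀ v ∉ A, c' v = c v) :
    ∑ v, φ v * c' v = ∑ v, φ v * c v + ∑ v ∈ A, φ v * (c' v - c v) := by
  rw [← sub_eq_iff_eq_add', ← Finset.sum_sub_distrib]
  simp only [← mul_sub]
  refine (Finset.sum_subset (Finset.subset_univ A) fun v _ hv ↦ ?_).symm
  rw [h v hv, sub_self, mul_zero]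

theorem IsColoringOn.isAdmissible_of_regular {c : V → ZMod 3} (hc : IsColoringOn G Set.univ c)
    {d : ℕ} (hreg : G.IsRegularOfDegree d) : IsAdmissible G c := by
  intro u v huv
  have hne := hc (Set.mem_univ u) (Set.mem_univ v) huv
  exact ⟨hne, by rw [hreg u, hreg v]; exact fun h ↦ hne (add_right_cancel h)⟩

-- Recolouring one vertex of the class `φ = φ a` from `1` to `2` changes the pairing with `φ` by
-- `φ a`, so recolouring up to two of them makes the pairing vanish.
theorem IsAlternatingWeighting.exists_isColoringOn_sum_eq_zero {φ : V → ZMod 3}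
    (hφ : IsAlternatingWeighting G φ) (hne : ∀ v, φ v ≠ 0) {a b : V} (hab : a ≠ b)
    (heq : φ a = φ b) :
    ∃ c, IsColoringOn G Set.univ c ∧ ∑ v, φ v * c v = 0 := by
  let c (S : Finset V) (v : V) : ZMod 3 := if φ v = φ a then if v ∈ S then 2 else 1 else 0
  have hc : ∀ S, IsColoringOn G Set.univ (c S) := fun S ↦
    hφ.isColoringOn_ite hne (hne a) fun v ↦ by split_ifs <;> decide
  have hinsert : ∀ S, ∀ x ∉ S, φ x = φ a →
      ∑ v, φ v * c (insert x S) v = ∑ v, φ v * c S v + φ a := by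
    intro S x hxS hx
    rw [sum_mul_eq_add_of_forall_notMem φ (A := {x}) (c := c S) fun v hv ↦ by
      simp [c, Finset.mem_singleton.not.1 hv]]
    simp only [Finset.sum_singleton, c, hx, if_true, Finset.mem_insert_self, if_neg hxS]
    ring
  have h₁ := hinsert ∅ a (Finset.notMem_empty a) rfl
  have h₂ := hinsert {a} b (Finset.mem_singleton.not.2 hab.symm) heq.symm
  rw [insert_empty_eq] at h₁
  have key : ∀ s β : ZMod 3, β ≠ 0 → s = 0 ∨ s + β = 0 ∨ s + β + β = 0 := by decide
  rcases key (∑ v, φ v * c ∅ v) (φ a) (hne a) with h | h | h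
  exacts [⟨_, hc _, h⟩, ⟨_, hc _, h₁.trans h⟩, ⟨_, hc _, h₂.trans (h₁ ▸ h)⟩]

end RegularGraphs

section Cubic

open SimpleGraph

variable {V : Type*} [Fintype V] {G : SimpleGraph V}

theorem degree_top_eq (v : V) [Fintype ((⊤ : SimpleGraph V).neighborSet v)] :
    (⊤ : SimpleGraph V).degree v = Fintype.card V - 1 := by
  convert complete_graph_degree v

theorem exists_adj_pair_of_two_le_degree {v : V} (hv : 2 ≤ G.degree v) :
    ∃ a b, G.Adj v a ∧ G.Adj v b ∧ a ≠ b := by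
  obtain ⟨a, ha, b, hb, hab⟩ := Finset.one_lt_card.1 hv
  exact ⟨a, b, (G.mem_neighborFinset v a).1 ha, (G.mem_neighborFinset v b).1 hb, hab⟩

variable [DecidableEq V]

theorem redDeg_eq_sum_neighborFinset (r : Sym2 V → ℕ) (x : V) :
    redDeg G r x = ∑ w ∈ G.neighborFinset x, r s(x, w) := by
  refine (Finset.sum_nbij (s(x, ·)) (fun w hw ↦ ?_) (fun _ _ _ _ h ↦ Sym2.congr_right.1 h)
    (fun e he ↦ ?_) fun _ _ ↦ rfl).symm
  · simpa using hw
  · obtain ⟨heG, w, rfl⟩ := Finset.mem_filter.1 he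
    exact ⟨w, by simpa using heG, rfl⟩

-- `K₄` has no proper colouring with three colours; here red degrees `0`, `1`, `2`, `3` are used.
theorem lirtwoLE2_top_of_card_eq_four (hV : Fintype.card V = 4) :
    LIRtwoLE2 (⊤ : SimpleGraph V) := by
  let e : V ≃ Fin 4 := Fintype.equivFinOfCardEq hV
  let r : Sym2 V → ℕ := Sym2.lift
    ⟨fun x y ↦ min 2 ((e x).val + (e y).val - 3), fun x y ↦ by dsimp only; rw [Nat.add_comm]⟩
  have hr : ∀ s, r s ≤ 2 := Sym2.ind fun x y ↦ Nat.min_le_left _ _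
  have hred : ∀ x, redDeg ⊤ r x = e x := by
    have key : ∀ i : Fin 4, ∑ j with i ≠ j, min 2 (i.val + j.val - 3) = i := by decide
    intro x
    rw [redDeg_eq_sum_neighborFinset, ← key (e x)]
    refine Finset.sum_equiv e (fun y ↦ by simp) fun y _ ↦ rfl
  refine lirtwoLE2_of_forall_ne hr fun u v huv ↦ ?_
  have hne : redDeg ⊤ r u ≠ redDeg ⊤ r v := by
    rw [hred, hred]
    exact fun h ↦ huv (e.injective (Fin.val_injective h))
  have hu := redDeg_add_blueDeg (G := ⊤) hr u
  have hv := redDeg_add_blueDeg (G := ⊤) hr v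
  rw [degree_top_eq] at hu hv
  exact ⟨hne, by lia⟩

theorem lirtwoLE2_of_isRegularOfDegree_three (hG : G.Connected) (hreg : G.IsRegularOfDegree 3) :
    LIRtwoLE2 G := by
  by_cases htop : G = ⊤
  · obtain ⟨v⟩ := hG.nonempty
    have hcard := hreg v
    subst htop
    rw [degree_top_eq] at hcard
    exact lirtwoLE2_top_of_card_eq_four (by lia)
  have hbrooks : Nonempty (G.Coloring (ZMod 3)) :=
    ⟨(brooks le_rfl hG htop fun v ↦ (hreg v).le).toColoring (by simp)⟩
  obtain ⟨col⟩ := hbrooks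
  have hcol : IsColoringOn G Set.univ col := fun _ _ _ _ h ↦ col.valid h
  refine lirtwoLE2_of_forall_isAlternatingWeighting hG.preconnected
    ⟨col, hcol.isAdmissible_of_regular hreg⟩ fun φ hφ hne ↦ ?_
  obtain ⟨v⟩ := hG.nonempty
  obtain ⟨a, b, hva, hvb, hab⟩ := exists_adj_pair_of_two_le_degree ((hreg v).ge.trans' (by simp))
  obtain ⟨c, hc, hsum⟩ := hφ.exists_isColoringOn_sum_eq_zero hne hab
    (add_left_cancel ((hφ hva).trans (hφ hvb).symm))
  exact ⟨c, hc.isAdmissible_of_regular hreg, hsum⟩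

end Cubic

section InnerEdges

open SimpleGraph

variable {V : Type*} [Fintype V] {G : SimpleGraph V}

/-- A vertex of degree `2` both of whose neighbours have degree `2`; on a subdivided edge these are
the subdividing vertices other than the first and the last one. -/
structure IsInner (G : SimpleGraph V) (v : V) : Prop where
  degree_eq : G.degree v = 2
  degree_adj ⦃w : V⦄ (h : G.Adj v w) : G.degree w = 2

/-- `y` and `z` are the ends of an edge and both of them are inner vertices. -/
structure IsInnerEdge (G : SimpleGraph V) (y z : V) : Prop where
  adj : G.Adj y z
  left : IsInner G y
  right : IsInner G z

/-- `x` is the first vertex of a path of vertices of degree `2`, that is, it has a neighbour of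
another degree, and `a` and `b` are the next two vertices of this path, both of them inner. -/
structure IsThreadStart (G : SimpleGraph V) (x a b : V) : Prop where
  degree_eq : G.degree x = 2
  exists_outer : ∃ u, G.degree u ≠ 2 ∧ G.neighborSet x = {u, a}
  neighborSet_snd : G.neighborSet a = {x, b}
  inner_snd : IsInner G a
  inner_thd : IsInner G b

/-- Every maximal connected set of vertices of degree `2` has at least four elements. When `G` is a
subdivision of a cubic graph, these sets are the interiors of the subdivided edges. -/
def HasLongThreads (G : SimpleGraph V) : Prop :=
  ∀ x : {v | G.degree v = 2},
    4 ≤ ((G.induce {v | G.degree v = 2}).connectedComponentMk x).supp.ncard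

theorem exists_neighborSet_eq_pair {v u : V} (hv : G.degree v = 2) (huv : G.Adj v u) :
    ∃ a ≠ u, G.neighborSet v = {u, a} := by
  rw [← ncard_neighborSet] at hv
  obtain ⟨p, q, hpq, h⟩ := Set.ncard_eq_two.1 hv
  have hu : u ∈ ({p, q} : Set V) := h ▸ huv
  rcases hu with rfl | rfl
  · exact ⟨q, hpq.symm, h⟩
  · exact ⟨p, hpq, h.trans (Set.pair_comm _ _)⟩

theorem isInner_of_neighborSet_eq {v p q : V} (hN : G.neighborSet v = {p, q})
    (hv : G.degree v = 2) (hp : G.degree p = 2) (hq : G.degree q = 2) : IsInner G v := by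
  refine ⟨hv, fun w hw ↦ ?_⟩
  rw [← mem_neighborSet, hN] at hw
  rcases hw with rfl | rfl
  exacts [hp, hq]

theorem HasLongThreads.exists_adj_notMem (hlong : HasLongThreads G) {x : V}
    (hx : G.degree x = 2) {T : Set V} (hxT : x ∈ T) (hT : T.ncard < 4) :
    ∃ v ∈ T, ∃ w ∉ T, G.degree w = 2 ∧ G.Adj v w := by
  by_contra! h
  refine ((hlong ⟨x, hx⟩).trans (ncard_supp_le_of_closed hxT fun v hv w hw hvw ↦ ?_)).not_gt hT
  by_contra hwT
  exact h v hv w hwT hw hvw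

theorem ncard_triple_lt_four {α : Type*} (x y z : α) : ({x, y, z} : Set α).ncard < 4 := by
  have := Set.ncard_insert_le x {y, z}
  have := Set.ncard_insert_le y {z}
  have := Set.ncard_singleton z
  lia

theorem HasLongThreads.exists_isThreadStart (hlong : HasLongThreads G) {x u : V}
    (hx : G.degree x = 2) (hxu : G.Adj x u) (hu : G.degree u ≠ 2) :
    ∃ a b, IsThreadStart G x a b := by
  obtain ⟨a, -, hNx⟩ := exists_neighborSet_eq_pair hx hxu
  have hmem : ∀ {v w p q}, G.neighborSet v = {p, q} → G.Adj v w → w = p ∨ w = q :=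
    fun hN hvw ↦ by simpa [← mem_neighborSet, hN] using hvw
  obtain ⟨ha, hxa⟩ : G.degree a = 2 ∧ G.Adj x a := by
    obtain ⟨v, hv, w, -, hw2, hvw⟩ := hlong.exists_adj_notMem (T := {x}) hx rfl (by simp)
    grind
  obtain ⟨b, -, hNa⟩ := exists_neighborSet_eq_pair ha hxa.symm
  obtain ⟨hb, hab⟩ : G.degree b = 2 ∧ G.Adj a b := by
    obtain ⟨v, hv, w, hw, hw2, hvw⟩ := hlong.exists_adj_notMem (T := {x, a}) hx (by simp)
      ((Set.ncard_insert_le x {a}).trans_lt (by simp))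
    grind
  obtain ⟨d, -, hNb⟩ := exists_neighborSet_eq_pair hb hab.symm
  have hd : G.degree d = 2 := by
    obtain ⟨v, hv, w, hw, hw2, hvw⟩ := hlong.exists_adj_notMem (T := {x, a, b}) hx (by simp)
      (ncard_triple_lt_four x a b)
    grind
  exact ⟨a, b, hx, ⟨u, hu, hNx⟩, hNa, isInner_of_neighborSet_eq hNa ha hx hb,
    isInner_of_neighborSet_eq hNb hb ha hd⟩

namespace IsThreadStart

variable {x a b x' a' b' : V}

theorem isInnerEdge (h : IsThreadStart G x a b) : IsInnerEdge G a b :=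
  ⟨(h.neighborSet_snd ▸ Set.mem_insert_of_mem x rfl : b ∈ G.neighborSet a), h.inner_snd,
    h.inner_thd⟩

theorem not_isInner (h : IsThreadStart G x a b) : ¬ IsInner G x := fun hx ↦ by
  obtain ⟨u, hu, hN⟩ := h.exists_outer
  exact hu (hx.degree_adj (hN ▸ Set.mem_insert u _ : u ∈ G.neighborSet x))

theorem eq_of_snd_eq (h : IsThreadStart G x a b) (h' : IsThreadStart G x' a b') : x = x' := by
  have hx' : x' ∈ ({x, b} : Set V) := by
    rw [← h.neighborSet_snd, h'.neighborSet_snd]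
    exact Set.mem_insert _ _
  exact (hx'.resolve_right fun hb ↦ h'.not_isInner (hb ▸ h.inner_thd)).symm

theorem outer_unique (h : IsThreadStart G x a b) {u v : V} (hu : G.Adj x u) (hv : G.Adj x v)
    (hu2 : G.degree u ≠ 2) (hv2 : G.degree v ≠ 2) : u = v := by
  obtain ⟨w, -, hN⟩ := h.exists_outer
  have hout : ∀ t, G.Adj x t → G.degree t ≠ 2 → t = w := fun t ht ht2 ↦
    (hN ▸ ht : t ∈ ({w, a} : Set V)).resolve_right fun hta ↦
      ht2 (hta ▸ h.inner_snd.degree_eq)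
  exact (hout u hu hu2).trans (hout v hv hv2).symm

theorem degree_ne_or_isInner (h : IsThreadStart G x a b) {v : V} (hv : G.Adj x v) :
    G.degree v ≠ 2 ∨ IsInner G v := by
  obtain ⟨w, hw, hN⟩ := h.exists_outer
  rcases (hN ▸ hv : v ∈ ({w, a} : Set V)) with rfl | rfl
  exacts [.inl hw, .inr h.inner_snd]

theorem eq_thd (h : IsThreadStart G x a b) {v : V} (hv : IsInner G v) (hav : G.Adj a v) :
    v = b :=
  (h.neighborSet_snd ▸ hav : v ∈ ({x, b} : Set V)).resolve_left fun hvx ↦ h.not_isInner (hvx ▸ hv)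

theorem eq_or_eq_of_not_disjoint (h : IsThreadStart G x a b) (h' : IsThreadStart G x' a' b')
    (hne : x ≠ x') (hmeet : ¬ Disjoint ({a, b} : Set V) {a', b'}) :
    b = b' ∨ b = a' ∧ b' = a := by
  obtain ⟨w, hw, hw'⟩ := Set.not_disjoint_iff.1 hmeet
  rcases hw with rfl | rfl <;> rcases hw' with rfl | rfl
  · exact absurd (h.eq_of_snd_eq h') hne
  · exact .inr ⟨(h.eq_thd h'.inner_snd h'.isInnerEdge.adj.symm).symm, rfl⟩
  · exact .inr ⟨rfl, (h'.eq_thd h.inner_snd h.isInnerEdge.adj.symm).symm⟩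
  · exact .inl rfl

theorem disjoint_or_disjoint {x₁ a₁ b₁ x₂ a₂ b₂ x₃ a₃ b₃ : V} (h₁ : IsThreadStart G x₁ a₁ b₁)
    (h₂ : IsThreadStart G x₂ a₂ b₂) (h₃ : IsThreadStart G x₃ a₃ b₃) (h₁₂ : x₁ ≠ x₂)
    (h₁₃ : x₁ ≠ x₃) (h₂₃ : x₂ ≠ x₃) :
    Disjoint ({a₁, b₁} : Set V) {a₂, b₂} ∨ Disjoint ({a₁, b₁} : Set V) {a₃, b₃} := by
  by_contra! h
  have ha₁₂ : a₁ ≠ a₂ := fun h ↦ h₁₂ (h₁.eq_of_snd_eq (h ▸ h₂))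
  have ha₁₃ : a₁ ≠ a₃ := fun h ↦ h₁₃ (h₁.eq_of_snd_eq (h ▸ h₃))
  have ha₂₃ : a₂ ≠ a₃ := fun h ↦ h₂₃ (h₂.eq_of_snd_eq (h ▸ h₃))
  rcases h₁.eq_or_eq_of_not_disjoint h₂ h₁₂ h.1 with rfl | ⟨rfl, rfl⟩ <;>
    rcases h₁.eq_or_eq_of_not_disjoint h₃ h₁₃ h.2 with rfl | ⟨rfl, rfl⟩
  · obtain ⟨d, -, hN⟩ := exists_neighborSet_eq_pair h₁.inner_thd.degree_eq h₁.isInnerEdge.adj.symm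
    have hd : ∀ {v}, G.Adj b₁ v → a₁ ≠ v → v = d := fun {v} hv hne ↦
      (hN ▸ hv : v ∈ ({a₁, d} : Set V)).resolve_left hne.symm
    exact ha₂₃ ((hd h₂.isInnerEdge.adj.symm ha₁₂).trans (hd h₃.isInnerEdge.adj.symm ha₁₃).symm)
  · exact ha₁₂ (h₃.eq_thd h₂.inner_snd h₂.isInnerEdge.adj.symm).symm
  · exact ha₁₃ (h₂.eq_thd h₃.inner_snd h₃.isInnerEdge.adj.symm).symm
  · exact ha₂₃ rfl

end IsThreadStart

theorem HasLongThreads.exists_disjoint_isInnerEdge (hlong : HasLongThreads G)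
    (hdeg : ∀ v, G.degree v = 2) (x : V) :
    ∃ y z y' z', IsInnerEdge G y z ∧ IsInnerEdge G y' z' ∧ Disjoint ({y, z} : Set V) {y', z'} := by
  have hedge : ∀ {v w}, G.Adj v w → IsInnerEdge G v w := fun h ↦
    ⟨h, ⟨hdeg _, fun _ _ ↦ hdeg _⟩, hdeg _, fun _ _ ↦ hdeg _⟩
  obtain ⟨y, z, hyz, hNx⟩ := Set.ncard_eq_two.1 ((ncard_neighborSet x).trans (hdeg x))
  have hxy : G.Adj x y := (G.mem_neighborSet x y).1 (hNx ▸ Set.mem_insert y _)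
  have hxz : G.Adj x z := (G.mem_neighborSet x z).1 (hNx ▸ Set.mem_insert_of_mem y rfl)
  obtain ⟨d, hdx, hNz⟩ := exists_neighborSet_eq_pair (hdeg z) hxz.symm
  have hzd : G.Adj z d := (G.mem_neighborSet z d).1 (hNz ▸ Set.mem_insert_of_mem x rfl)
  have hdy : d ≠ y := by
    rintro rfl
    obtain ⟨e, -, hNd⟩ := exists_neighborSet_eq_pair (hdeg d) hxy.symm
    have hze : z ∈ ({x, e} : Set V) := hNd ▸ hzd.symm
    obtain ⟨v, hv, w, hw, -, hvw⟩ := hlong.exists_adj_notMem (hdeg x) (Set.mem_insert x {d, z})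
      (ncard_triple_lt_four x d z)
    rw [← mem_neighborSet] at hvw
    have := hxz.ne
    grind
  refine ⟨x, y, z, d, hedge hxy, hedge hzd, ?_⟩
  have := hxz.ne
  grind

-- A neighbour of `u` of degree `2` starts a thread itself, and any other one has a neighbour which
-- does. This is injective since the first vertex of a thread has only one outer neighbour.
theorem HasLongThreads.exists_injOn_isThreadStart (hlong : HasLongThreads G)
    (hadj : ∀ v, G.degree v ≠ 2 → ∃ w, G.Adj v w ∧ G.degree w = 2) {u : V} (hu : G.degree u ≠ 2) :
    ∃ m : V → V, Set.InjOn m (G.neighborSet u) ∧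
      ∀ w, G.Adj u w → ∃ a b, IsThreadStart G (m w) a b := by
  have hex : ∀ w, ∃ x, G.degree x = 2 ∧ (x = w ∨ G.degree w ≠ 2 ∧ G.Adj x w) := by
    intro w
    by_cases hw : G.degree w = 2
    · exact ⟨w, hw, .inl rfl⟩
    · obtain ⟨x, hwx, hx⟩ := hadj w hw
      exact ⟨x, hx, .inr ⟨hw, hwx.symm⟩⟩
  choose m hm2 hm using hex
  have hstart : ∀ w, G.Adj u w → ∃ a b, IsThreadStart G (m w) a b := fun w huw ↦ by
    rcases hm w with h | ⟨hw, hmw⟩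
    · exact hlong.exists_isThreadStart (hm2 w) (h.symm ▸ huw.symm : G.Adj (m w) u) hu
    · exact hlong.exists_isThreadStart (hm2 w) hmw hw
  refine ⟨m, fun w huw w' huw' h ↦ ?_, hstart⟩
  obtain ⟨a, b, hab⟩ := hstart w huw
  have houter : ∀ p q, G.Adj (m w) p → G.Adj (m w) q → G.degree p ≠ 2 → G.degree q ≠ 2 → p = q :=
    fun _ _ ↦ hab.outer_unique
  have := G.loopless.irrefl u
  grind [mem_neighborSet, G.adj_symm]

theorem HasLongThreads.exists_isInnerEdge_or_disjoint (hlong : HasLongThreads G)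
    (hconn : G.Preconnected) (hdeg : ∀ v, G.degree v = 2 ∨ G.degree v = 3) {x : V}
    (hx : G.degree x = 2) :
    (∃ b y z, (∀ w, w = b ∨ G.Adj b w → G.degree w = 3) ∧ IsInnerEdge G y z) ∨
    ∃ y z y' z', IsInnerEdge G y z ∧ IsInnerEdge G y' z' ∧ Disjoint ({y, z} : Set V) {y', z'} := by
  by_cases hall : ∀ v, G.degree v = 2
  · exact .inr (hlong.exists_disjoint_isInnerEdge hall x)
  push Not at hall
  obtain ⟨v, hv⟩ := hall
  by_cases hadj : ∀ v, G.degree v ≠ 2 → ∃ w, G.Adj v w ∧ G.degree w = 2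
  · obtain ⟨m, hm, hstart⟩ := hlong.exists_injOn_isThreadStart hadj hv
    obtain ⟨w₁, w₂, w₃, h₁₂, h₁₃, h₂₃, hN⟩ :=
      Set.ncard_eq_three.1 ((ncard_neighborSet v).trans ((hdeg v).resolve_left hv))
    obtain ⟨h₁, h₂, h₃⟩ : G.Adj v w₁ ∧ G.Adj v w₂ ∧ G.Adj v w₃ := by simp [← mem_neighborSet, hN]
    obtain ⟨a₁, b₁, hs₁⟩ := hstart w₁ h₁
    obtain ⟨a₂, b₂, hs₂⟩ := hstart w₂ h₂
    obtain ⟨a₃, b₃, hs₃⟩ := hstart w₃ h₃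
    right
    rcases hs₁.disjoint_or_disjoint hs₂ hs₃ (hm.ne h₁ h₂ h₁₂) (hm.ne h₁ h₃ h₁₃)
      (hm.ne h₂ h₃ h₂₃) with h | h
    exacts [⟨a₁, b₁, a₂, b₂, hs₁.isInnerEdge, hs₂.isInnerEdge, h⟩,
      ⟨a₁, b₁, a₃, b₃, hs₁.isInnerEdge, hs₃.isInnerEdge, h⟩]
  · push Not at hadj
    obtain ⟨b, hb, hbw⟩ := hadj
    obtain ⟨x, hx, u, hu, hxu⟩ :=
      exists_adj_mem_notMem hconn (S := {v | G.degree v = 2}) hx hv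
    obtain ⟨y, z, hyz⟩ := hlong.exists_isThreadStart hx hxu hu
    refine .inl ⟨b, y, z, fun w hw ↦ (hdeg w).resolve_left ?_, hyz.isInnerEdge⟩
    rcases hw with rfl | hw
    exacts [hb, hbw w hw]

end InnerEdges

section Extension

open SimpleGraph

variable {V : Type*} [Fintype V] {G : SimpleGraph V}

theorem HasLongThreads.exists_forall_outer_eq (hlong : HasLongThreads G) :
    ∃ p : V → V, ∀ x u, G.degree x = 2 → G.Adj x u → G.degree u ≠ 2 → p x = u := by
  have hex : ∀ x, ∃ v, (∃ u, G.Adj x u ∧ G.degree u ≠ 2) → G.Adj x v ∧ G.degree v ≠ 2 := fun x ↦ by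
    by_cases h : ∃ u, G.Adj x u ∧ G.degree u ≠ 2
    exacts [h.imp fun _ hu _ ↦ hu, ⟨x, fun h' ↦ absurd h' h⟩]
  choose p hp using hex
  refine ⟨p, fun x u hx hxu hu ↦ ?_⟩
  obtain ⟨hxp, hp2⟩ := hp x ⟨u, hxu, hu⟩
  obtain ⟨a, b, hab⟩ := hlong.exists_isThreadStart hx hxu hu
  exact hab.outer_unique hxp hxu hp2 hu

theorem HasLongThreads.exists_isColoringOn_not_isInner (hlong : HasLongThreads G)
    {f : V → ZMod 3} (hf : IsColoringOn G {v | G.degree v ≠ 2} f) :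
    ∃ g : V → ZMod 3, IsColoringOn G {v | ¬ IsInner G v} g ∧
      Set.EqOn g f {v | G.degree v ≠ 2} ∧
      ∀ x u, G.degree x = 2 → G.Adj x u → G.degree u ≠ 2 → g x = f u - 1 := by
  obtain ⟨p, hp⟩ := hlong.exists_forall_outer_eq
  let g v := if G.degree v = 2 then f (p v) - 1 else f v
  have hg : ∀ x u, G.degree x = 2 → G.Adj x u → G.degree u ≠ 2 → g x = f u - 1 :=
    fun x u hx hxu hu ↦ by
    simp only [g, if_pos hx, hp x u hx hxu hu]
  have hgf : Set.EqOn g f {v | G.degree v ≠ 2} := fun v hv ↦ if_neg hv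
  have hsub : ∀ k : ZMod 3, k - 1 ≠ k := by decide
  refine ⟨g, fun u hu v hv huv ↦ ?_, hgf, hg⟩
  by_cases hu2 : G.degree u = 2 <;> by_cases hv2 : G.degree v = 2
  · obtain ⟨t, hut, ht⟩ : ∃ t, G.Adj u t ∧ G.degree t ≠ 2 := by
      by_contra! h
      exact hu ⟨hu2, h⟩
    obtain ⟨a, b, hab⟩ := hlong.exists_isThreadStart hu2 hut ht
    exact ((hab.degree_ne_or_isInner huv).elim (absurd hv2) hv).elim
  · rw [hg u v hu2 huv hv2, hgf hv2]
    exact hsub (f v)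
  · rw [hg v u hv2 huv.symm hu2, hgf hu2]
    exact (hsub (f u)).symm
  · rw [hgf hu2, hgf hv2]
    exact hf hu2 hv2 huv

-- At an edge from a vertex `u` of degree `3` to a vertex `x` of degree `2` the only admissible
-- choice is `c x = c u - 1`, which leaves just the inner vertices to be coloured.
theorem HasLongThreads.exists_isAdmissible (hlong : HasLongThreads G)
    (hdeg : ∀ v, G.degree v = 2 ∨ G.degree v = 3) {f : V → ZMod 3}
    (hf : IsColoringOn G {v | G.degree v ≠ 2} f) :
    ∃ c, IsAdmissible G c ∧ Set.EqOn c f {v | G.degree v ≠ 2} := by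
  obtain ⟨g, hg, hgf, hgx⟩ := hlong.exists_isColoringOn_not_isInner hf
  obtain ⟨c, hc, hcg⟩ := hg.exists_extension (Set.subset_univ _) fun W hSW _ ↦ by
    obtain ⟨v, hvW, hv⟩ := Set.exists_of_ssubset hSW
    refine ⟨v, ⟨hvW, hv⟩, ((Set.ncard_le_ncard Set.inter_subset_left).trans_eq
      (ncard_neighborSet v)).trans_lt ?_⟩
    simp [(not_not.1 hv).degree_eq]
  have hcf : Set.EqOn c f {v | G.degree v ≠ 2} := fun v hv ↦
    (hcg fun h ↦ hv h.degree_eq).trans (hgf hv)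
  have hcx : ∀ {x u}, G.degree x = 2 → G.Adj x u → G.degree u = 3 → c u + 3 ≠ c x + 2 := by
    intro x u hx hxu hu
    have hu2 : G.degree u ≠ 2 := by lia
    rw [hcf hu2, hcg fun h ↦ hu2 (h.degree_adj hxu), hgx x u hx hxu hu2]
    generalize f u = k
    revert k
    decide
  refine ⟨c, fun u v huv ↦ ⟨hc (Set.mem_univ u) (Set.mem_univ v) huv, ?_⟩, hcf⟩
  have hne := hc (Set.mem_univ u) (Set.mem_univ v) huv
  rcases hdeg u with hu | hu <;> rcases hdeg v with hv | hv <;> rw [hu, hv]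
  · exact fun h ↦ hne (add_right_cancel h)
  · exact (hcx hu huv hv).symm
  · exact hcx hv huv.symm hu
  · exact fun h ↦ hne (add_right_cancel h)

end Extension

section Recolouring

open SimpleGraph Function

variable {V : Type*} [Fintype V] {G : SimpleGraph V} {c : V → ZMod 3}

theorem IsAdmissible.of_eqOn_compl {c' : V → ZMod 3} (hc : IsAdmissible G c) {A : Set V}
    (heq : Set.EqOn c' c Aᶜ)
    (hA : ∀ v ∈ A, ∀ w, G.Adj v w → G.degree w = G.degree v ∧ c' v ≠ c' w) :
    IsAdmissible G c' := by
  have hmem : ∀ {v w}, v ∈ A → G.Adj v w → c' v ≠ c' w ∧ c' v + G.degree v ≠ c' w + G.degree w :=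
    fun {v w} hv hvw ↦ by
      obtain ⟨hdeg, hne⟩ := hA v hv w hvw
      exact ⟨hne, by rw [hdeg]; exact fun h ↦ hne (add_right_cancel h)⟩
  intro u v huv
  by_cases hu : u ∈ A
  · exact hmem hu huv
  by_cases hv : v ∈ A
  · exact (hmem hv huv.symm).imp Ne.symm Ne.symm
  · rw [heq hu, heq hv]
    exact hc huv

theorem IsInnerEdge.exists_isAdmissible_sub_eq {y z : V} (hyz : IsInnerEdge G y z)
    (hc : IsAdmissible G c) {s : ZMod 3} (hs : s ≠ 0) :
    ∃ c', IsAdmissible G c' ∧ Set.EqOn c' c {y, z}ᶜ ∧ c' y - c' z = s := by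
  obtain ⟨p, -, hNy⟩ := exists_neighborSet_eq_pair hyz.left.degree_eq hyz.adj
  obtain ⟨q, -, hNz⟩ := exists_neighborSet_eq_pair hyz.right.degree_eq hyz.adj.symm
  have key : ∀ a b s : ZMod 3, s ≠ 0 → ∃ k l, a ≠ k ∧ b ≠ l ∧ k ≠ l ∧ k - l = s := by decide
  obtain ⟨k, l, hk, hl, _, rfl⟩ := key (c p) (c q) s hs
  have hcy : ∀ {w}, G.Adj y w → w ≠ z → c w ≠ k := fun {w} hyw hwz ↦
    (hNy ▸ hyw : w ∈ ({z, p} : Set V)).resolve_left hwz ▸ hk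
  have hcz : ∀ {w}, G.Adj z w → w ≠ y → c w ≠ l := fun {w} hzw hwy ↦
    (hNz ▸ hzw : w ∈ ({y, q} : Set V)).resolve_left hwy ▸ hl
  have hzy := hyz.adj.ne'
  have heq : Set.EqOn (update (update c y k) z l) c {y, z}ᶜ := fun v hv ↦ by grind
  have hy : update (update c y k) z l y = k := by grind
  have hz : update (update c y k) z l z = l := by grind
  refine ⟨update (update c y k) z l, hc.of_eqOn_compl heq ?_, heq, by rw [hy, hz]⟩
  rintro v (rfl | rfl) w hvw
  · refine ⟨(hyz.left.degree_adj hvw).trans hyz.left.degree_eq.symm, ?_⟩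
    have := hvw.ne
    grind
  · refine ⟨(hyz.right.degree_adj hvw).trans hyz.right.degree_eq.symm, ?_⟩
    have := hvw.ne
    grind

theorem IsInnerEdge.exists_isAdmissible_sum_eq {y z : V} (hyz : IsInnerEdge G y z)
    (hc : IsAdmissible G c) {φ : V → ZMod 3} (hφ : IsAlternatingWeighting G φ) {s : ZMod 3}
    (hs : s ≠ 0) :
    ∃ c', IsAdmissible G c' ∧ Set.EqOn c' c {y, z}ᶜ ∧
      ∑ v, φ v * c' v = ∑ v, φ v * c v + φ y * (s - (c y - c z)) := by
  obtain ⟨c', hc', heq, rfl⟩ := hyz.exists_isAdmissible_sub_eq hc hs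
  refine ⟨c', hc', heq, ?_⟩
  rw [sum_mul_eq_add_of_forall_notMem φ (A := {y, z}) fun v hv ↦ heq (by simpa using hv),
    Finset.sum_pair hyz.adj.ne]
  linear_combination (c' z - c z) * hφ hyz.adj

-- Along `y z` the difference `c y - c z` takes both nonzero values, so the pairing with `φ` takes
-- all but one value of `ZMod 3`; the excluded value is not the same for `c₁` and `c₂`.
theorem IsInnerEdge.exists_isAdmissible_sum_eq_zero {y z : V} (hyz : IsInnerEdge G y z)
    {c₁ c₂ : V → ZMod 3} (h₁ : IsAdmissible G c₁) (h₂ : IsAdmissible G c₂) (hy : c₁ y = c₂ y)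
    (hz : c₁ z = c₂ z) {φ : V → ZMod 3} (hφ : IsAlternatingWeighting G φ) (hφy : φ y ≠ 0)
    (hne : ∑ v, φ v * c₁ v ≠ ∑ v, φ v * c₂ v) : ∃ c, IsAdmissible G c ∧ ∑ v, φ v * c v = 0 := by
  have key : ∀ a b t : ZMod 3, a ≠ 0 → b - a * t ≠ 0 → ∃ s ≠ 0, b + a * (s - t) = 0 := by decide
  have hreach : ∀ c, IsAdmissible G c → ∑ v, φ v * c v - φ y * (c y - c z) ≠ 0 →
      ∃ c, IsAdmissible G c ∧ ∑ v, φ v * c v = 0 := fun c hc h ↦ by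
    obtain ⟨s, hs, hs0⟩ := key _ _ _ hφy h
    obtain ⟨c', hc', -, hsum⟩ := hyz.exists_isAdmissible_sum_eq hc hφ hs
    exact ⟨c', hc', hsum.trans hs0⟩
  by_cases h : ∑ v, φ v * c₁ v - φ y * (c₁ y - c₁ z) = 0
  · refine hreach c₂ h₂ fun h' ↦ hne ?_
    rw [hy, hz] at h
    exact (sub_eq_zero.1 h).trans (sub_eq_zero.1 h').symm
  · exact hreach c₁ h₁ h

theorem HasLongThreads.exists_isAdmissible_sum_eq_zero_of_cubic (hlong : HasLongThreads G)
    (hdeg : ∀ v, G.degree v = 2 ∨ G.degree v = 3) {φ : V → ZMod 3} (hφ : IsAlternatingWeighting G φ)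
    (hne : ∀ v, φ v ≠ 0) {b y z : V} (hb : ∀ w, w = b ∨ G.Adj b w → G.degree w = 3)
    (hyz : IsInnerEdge G y z) : ∃ c, IsAdmissible G c ∧ ∑ v, φ v * c v = 0 := by
  have hb3 := hb b (.inl rfl)
  have hf := hφ.isColoringOn_ite hne (hne b) (g := fun _ ↦ 1) fun _ ↦ one_ne_zero
  obtain ⟨c, hc, hcf⟩ := hlong.exists_isAdmissible hdeg (hf.mono (Set.subset_univ _))
  have hcb : c b = 1 := (hcf (by simp [hb3])).trans (if_pos rfl)
  have hcw : ∀ w, G.Adj b w → c w = 0 := fun w hbw ↦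
    (hcf (by simp [hb w (.inr hbw)])).trans (if_neg <|
      (hφ.apply_eq_iff_ne hbw (hne b) (hne b)).1 rfl)
  have hupdate : ∀ v ≠ b, update c b 2 v = c v := fun v hv ↦ update_of_ne hv 2 c
  have hc' : IsAdmissible G (update c b 2) := by
    refine hc.of_eqOn_compl (A := {b}) hupdate ?_
    rintro _ rfl w hbw
    rw [update_self, hupdate w hbw.ne', hcw w hbw]
    exact ⟨(hb w (.inr hbw)).trans hb3.symm, by decide⟩
  have hneb : ∀ {w}, IsInner G w → w ≠ b := by
    rintro w hw rfl
    simp [hw.degree_eq] at hb3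
  refine hyz.exists_isAdmissible_sum_eq_zero hc' hc (hupdate y (hneb hyz.left))
    (hupdate z (hneb hyz.right)) hφ (hne y) ?_
  rw [sum_mul_eq_add_of_forall_notMem φ (A := {b}) fun v hv ↦ hupdate v (by simpa using hv),
    Finset.sum_singleton, update_self, hcb]
  simpa [show (2 : ZMod 3) - 1 = 1 from rfl] using hne b

theorem IsAdmissible.exists_sum_eq_zero_of_disjoint (hc : IsAdmissible G c) {φ : V → ZMod 3}
    (hφ : IsAlternatingWeighting G φ) {y z y' z' : V} (hy : φ y ≠ 0) (hy' : φ y' ≠ 0)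
    (hyz : IsInnerEdge G y z) (hyz' : IsInnerEdge G y' z')
    (hdisj : Disjoint ({y, z} : Set V) {y', z'}) :
    ∃ c, IsAdmissible G c ∧ ∑ v, φ v * c v = 0 := by
  obtain ⟨c', hc', heq, hsum⟩ := hyz'.exists_isAdmissible_sum_eq hc hφ
    (sub_ne_zero.2 (hc hyz'.adj.symm).1)
  have hsub := Set.subset_compl_iff_disjoint_right.2 hdisj
  refine hyz.exists_isAdmissible_sum_eq_zero hc' hc (heq (hsub (Set.mem_insert y _)))
    (heq (hsub (Set.mem_insert_of_mem y rfl))) hφ hy ?_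
  have key : ∀ a b : ZMod 3, a ≠ b → b - a - (a - b) ≠ 0 := by decide
  rw [hsum]
  simpa [hy'] using key _ _ (hc hyz'.adj).1

end Recolouring

section Subdivision

variable {V : Type*} [Fintype V] [DecidableEq V] {G : SimpleGraph V}

theorem HasLongThreads.lirtwoLE2 (hlong : HasLongThreads G) (hconn : G.Connected)
    (hdeg : ∀ v, G.degree v = 2 ∨ G.degree v = 3) {x : V} (hx : G.degree x = 2) :
    LIRtwoLE2 G := by
  have hdeg3 : ∀ v, G.degree v ≤ Nat.card (ZMod 3) := fun v ↦ by
    rcases hdeg v with h | h <;> simp [h]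
  have hex : ∃ c, IsAdmissible G c := by
    obtain ⟨f, hf⟩ := exists_isColoringOn_compl_singleton (α := ZMod 3) hconn.preconnected hdeg3 x
    obtain ⟨c, hc, -⟩ := hlong.exists_isAdmissible hdeg (hf.mono fun v hv ↦ by
      rintro rfl
      exact hv hx)
    exact ⟨c, hc⟩
  refine lirtwoLE2_of_forall_isAlternatingWeighting hconn.preconnected hex fun φ hφ hne ↦ ?_
  rcases hlong.exists_isInnerEdge_or_disjoint hconn.preconnected hdeg hx with
    ⟨b, y, z, hb, hyz⟩ | ⟨y, z, y', z', hyz, hyz', hdisj⟩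
  · exact hlong.exists_isAdmissible_sum_eq_zero_of_cubic hdeg hφ hne hb hyz
  · obtain ⟨c, hc⟩ := hex
    exact hc.exists_sum_eq_zero_of_disjoint hφ (hne y) (hne y') hyz hyz' hdisj

end Subdivision

theorem lir_two_mul_cubic_subdivided_general {V : Type*} [Fintype V] [DecidableEq V]
    (G : SimpleGraph V) (hconn : G.Connected)
    (hdeg : ∀ v : V, G.degree v = 2 ∨ G.degree v = 3) (hlong : HasLongThreads G) :
    LIRtwoLE2 G := by
  by_cases hx : ∃ x, G.degree x = 2
  · obtain ⟨x, hx⟩ := hx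
    exact hlong.lirtwoLE2 hconn hdeg hx
  · push Not at hx
    exact lirtwoLE2_of_isRegularOfDegree_three hconn fun v ↦ (hdeg v).resolve_left (hx v)

/-- Let `G` be a connected simple graph in which every vertex has degree 2 or
3, such that (with `D` the set of degree-2 vertices and `H` the subgraph of
`G` induced on `D`) every connected component of `H` is a path with at least
4 vertices (i.e. `H` is acyclic with maximum degree at most 2 and every
component has at least 4 vertices), the ends of each such component path have
degree-3 neighbors in `G` which are distinct and non-adjacent, and distinct
component paths attach to distinct pairs of degree-3 vertices.  (Equivalently,
`G` is obtained from a cubic graph by replacing some of its edges with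
internally disjoint paths of length at least 5.)  Then `lir(²G) ≤ 2`. -/
theorem lir_two_mul_cubic_subdivided {V : Type*} [Fintype V] [DecidableEq V]
    (G : SimpleGraph V) (hconn : G.Connected)
    (hdeg : ∀ v : V, G.degree v = 2 ∨ G.degree v = 3)
    (D : Set V) (hD : D = {v : V | G.degree v = 2})
    (H : SimpleGraph D) (hH : H = G.induce D)
    -- every component of `H` is a path with at least 4 vertices:
    (hacyc : H.IsAcyclic)
    (hmax : ∀ x : D, H.degree x ≤ 2)
    (hbig : ∀ x : D, 4 ≤ (H.connectedComponentMk x).supp.ncard)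
    -- the ends of each component path attach to distinct non-adjacent
    -- degree-3 vertices of `G`:
    (hends : ∀ x y : D, H.connectedComponentMk x = H.connectedComponentMk y →
      x ≠ y → H.degree x ≤ 1 → H.degree y ≤ 1 →
      ∀ u v : V, G.Adj (x : V) u → u ∉ D → G.Adj (y : V) v → v ∉ D →
        u ≠ v ∧ ¬ G.Adj u v)
    -- distinct component paths attach to distinct pairs of degree-3 vertices:
    (hdistinct : ∀ x₁ y₁ x₂ y₂ : D,
      H.connectedComponentMk x₁ = H.connectedComponentMk y₁ →
      H.connectedComponentMk x₂ = H.connectedComponentMk y₂ →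
      H.connectedComponentMk x₁ ≠ H.connectedComponentMk x₂ →
      x₁ ≠ y₁ → x₂ ≠ y₂ →
      H.degree x₁ ≤ 1 → H.degree y₁ ≤ 1 → H.degree x₂ ≤ 1 → H.degree y₂ ≤ 1 →
      ∀ u₁ v₁ u₂ v₂ : V,
        G.Adj (x₁ : V) u₁ → u₁ ∉ D → G.Adj (y₁ : V) v₁ → v₁ ∉ D →
        G.Adj (x₂ : V) u₂ → u₂ ∉ D → G.Adj (y₂ : V) v₂ → v₂ ∉ D →
        s(u₁, v₁) ≠ s(u₂, v₂)) :
    LIRtwoLE2 G := by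
  subst hD hH
  exact lir_two_mul_cubic_subdivided_general G hconn hdeg hbig
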